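/- arXiv:1501.01549 — 2 statements merged into one kernel-verified Lean document; each statement's English description precedes it below -/
import Mathlib

section
/- If a probability mass function Pon a finite set 𝒳×𝒴 admits an embedding ψ (with arbitrary finite-dimensional working registers A', B') with zero leakage, i.e. S(X;BB')_ψ = I(X;Y), then P is trivial: H(X↘Y | Y) = 0. Equivalently, every embedding of a non-trivial primitive leaks information. -/
open scoped BigOperators
open Matrix
open scoped ComplexOrder

attribute [local instance 10] Classical.propDecidable

noncomputable section

/-- Base-2 Shannon entropy of a finitely supported real function. -/
def shannonEntropy {α : Type*} [Fintype α] (p : α → ℝ) : ℝ :=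
  -∑ x, p x * Real.logb 2 (p x)

/-- Von Neumann entropy: base-2 Shannon entropy of the eigenvalue multiset. -/
def vonNeumannEntropy {n : Type*} [Fintype n] [DecidableEq n] (ρ : Matrix n n ℂ) : ℝ :=
  if h : ρ.IsHermitian then shannonEntropy h.eigenvalues else 0

/-- Rank-one outer product `|φ⟩⟨φ|`. -/
def outer {n : Type*} (φ : n → ℂ) : Matrix n n ℂ :=
  fun i j => φ i * (starRingEnd ℂ) (φ j)

/-- Partial trace over the first tensor factor. -/
def trLeft {m n : Type*} [Fintype m] (ρ : Matrix (m × n) (m × n) ℂ) : Matrix n n ℂ :=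
  fun i j => ∑ a, ρ (a, i) (a, j)

/-- Partial trace over the second tensor factor. -/
def trRight {m n : Type*} [Fintype n] (ρ : Matrix (m × n) (m × n) ℂ) : Matrix m m ℂ :=
  fun i j => ∑ b, ρ (i, b) (j, b)

variable {𝒳 𝒴 : Type*} [Fintype 𝒳] [Fintype 𝒴] [DecidableEq 𝒳] [DecidableEq 𝒴]

def margX (P : 𝒳 × 𝒴 → ℝ) (x : 𝒳) : ℝ := ∑ y, P (x, y)

def margY (P : 𝒳 × 𝒴 → ℝ) (y : 𝒴) : ℝ := ∑ x, P (x, y)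

/-- Classical base-2 mutual information `I(X;Y) = H(X) + H(Y) − H(X,Y)`. -/
def mutualInfo (P : 𝒳 × 𝒴 → ℝ) : ℝ :=
  shannonEntropy (margX P) + shannonEntropy (margY P) - shannonEntropy P

/-- `f_X(x) = P_{Y|X=x}`, the dependent-part map of `X` w.r.t. `Y`. -/
def condYX (P : 𝒳 × 𝒴 → ℝ) (x : 𝒳) : 𝒴 → ℝ := fun y => P (x, y) / margX P x

/-- `H(X↘Y | Y)`: the conditional Shannon entropy of the dependent part
`X↘Y = f_X(X)` given `Y`. -/
def depCondEntropyX (P : 𝒳 × 𝒴 → ℝ) : ℝ :=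
  -∑ p : 𝒳 × 𝒴, P p *
    Real.logb 2
      ((∑ x' ∈ Finset.univ.filter fun x' => condYX P x' = condYX P p.1, P (x', p.2)) /
        margY P p.2)

section embedding

variable {dA dB : ℕ}

/-- Block `x` of the cq-state `ρ_{XBB'}` (working register `A'` traced out) of the
embedding `|ψ⟩ = Σ_{x,y} √P(x,y) |x⟩|y⟩|φ^{x,y}⟩_{A'B'}`. -/
def blockX (P : 𝒳 × 𝒴 → ℝ) (φ : 𝒳 → 𝒴 → Fin dA × Fin dB → ℂ) (x : 𝒳) :
    Matrix (𝒴 × Fin dB) (𝒴 × Fin dB) ℂ := fun p q =>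
  ∑ a : Fin dA,
    ((Real.sqrt (P (x, p.1)) : ℂ) * φ x p.1 (a, p.2)) *
      (starRingEnd ℂ) ((Real.sqrt (P (x, q.1)) : ℂ) * φ x q.1 (a, q.2))

/-- `S(X;BB')_ψ = H(X) + S(ρ_{BB'}) − S(ρ_{XBB'})`. -/
def SXBB (P : 𝒳 × 𝒴 → ℝ) (φ : 𝒳 → 𝒴 → Fin dA × Fin dB → ℂ) : ℝ :=
  shannonEntropy (margX P) + vonNeumannEntropy (∑ x, blockX P φ x) -
    vonNeumannEntropy (Matrix.blockDiagonal (blockX P φ))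

end embedding

lemma star_mul_self_eq_normSq (z : ℂ) : star z * z = ((‖z‖ ^ 2 : ℝ) : ℂ) := by
  simpa using Complex.conj_mul' z

lemma sum_mul_star_mul_left {N : Type*} [Fintype N] [DecidableEq N] (s : N → ℝ)
    (A B : Matrix N N ℂ) :
    ∑ k, ∑ j, (s k : ℂ) * (star (A k j) * B k j) =
      (Aᴴ * diagonal (fun k => (s k : ℂ)) * B).trace := by
  rw [Finset.sum_comm]
  simp only [trace, diag_apply, mul_apply (M := _ * diagonal _), mul_diagonal,
    conjTranspose_apply]
  refine Finset.sum_congr rfl fun j _ => Finset.sum_congr rfl fun k _ => by ring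

lemma sum_mul_star_mul_right {N : Type*} [Fintype N] [DecidableEq N] (r : N → ℝ)
    (A B : Matrix N N ℂ) :
    ∑ k, ∑ j, (r j : ℂ) * (star (A k j) * B k j) =
      (B * diagonal (fun k => (r k : ℂ)) * Aᴴ).trace := by
  simp only [trace, diag_apply, mul_apply (M := _ * diagonal _), mul_diagonal,
    conjTranspose_apply]
  refine Finset.sum_congr rfl fun j _ => Finset.sum_congr rfl fun k _ => by ring

lemma eq_zero_deriv_of_monotone_of_eq {f f' : ℝ → ℝ}
    (hc : ContinuousOn f (Set.Icc 0 1))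
    (hd : ∀ t ∈ Set.Ioo (0 : ℝ) 1, HasDerivAt f (f' t) t)
    (hnn : ∀ t ∈ Set.Ioo (0 : ℝ) 1, 0 ≤ f' t) (h01 : f 1 = f 0) :
    ∀ t ∈ Set.Ioo (0 : ℝ) 1, f' t = 0 := by
  have hmono : MonotoneOn f (Set.Icc 0 1) := by
    refine monotoneOn_of_deriv_nonneg (convex_Icc 0 1) hc ?_ ?_
    · intro t ht
      rw [interior_Icc] at ht
      exact (hd t ht).differentiableAt.differentiableWithinAt
    · intro t ht
      rw [interior_Icc] at ht
      rw [(hd t ht).deriv]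
      exact hnn t ht
  have hconst : ∀ t ∈ Set.Icc (0 : ℝ) 1, f t = f 0 := fun t ht =>
    le_antisymm (h01 ▸ hmono ht (by simp) ht.2) (hmono (by simp) ht ht.1)
  intro t ht
  have h1 : f =ᶠ[nhds t] fun _ => f 0 := by
    filter_upwards [Ioo_mem_nhds ht.1 ht.2] with u hu
    exact hconst u ⟨hu.1.le, hu.2.le⟩
  exact (hd t ht).unique ((hasDerivAt_const t (f 0)).congr_of_eventuallyEq h1)

section equality

variable {N : Type*} [Fintype N] [DecidableEq N] {U V α β : Matrix N N ℂ} {r s q : N → ℝ}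

/-- The quadratic form identity behind the monotonicity of relative entropy under a measurement
in the standard basis: completing the square at the diagonal operator with entries
`q i / (1 - t + t * q i)`. -/
lemma sum_sq_completed (hU : U * Uᴴ = 1) (hV : V * Vᴴ = 1)
    (hα : α = U * diagonal (fun j => (r j : ℂ)) * Uᴴ)
    (hβ : β = V * diagonal (fun j => (s j : ℂ)) * Vᴴ)
    (c : N → ℝ) (t : ℝ) :
    ∑ k, ∑ j, (((1 - t) * s k + t * r j) *
        ‖(Vᴴ * diagonal (fun i => (c i : ℂ)) * U) k j‖ ^ 2
        - 2 * (r j * (star ((Vᴴ * U) k j) *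
          (Vᴴ * diagonal (fun i => (c i : ℂ)) * U) k j).re)) =
      ∑ i, (c i ^ 2 * ((1 - t) * (β i i).re + t * (α i i).re) - 2 * (c i * (α i i).re)) := by
  set X : Matrix N N ℂ := diagonal (fun i => (c i : ℂ)) with hX
  have hXH : Xᴴ = X := by
    rw [hX, diagonal_conjTranspose]; congr 1; ext i; simp
  set Y := Vᴴ * X * U with hY
  set M := Vᴴ * U with hM
  have h2 : ∑ k, ∑ j, (s k : ℂ) * (star (Y k j) * Y k j) = (X * β * X).trace := by
    rw [sum_mul_star_mul_left, hY, hβ]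
    simp only [conjTranspose_mul, conjTranspose_conjTranspose, hXH]
    calc _ = (Uᴴ * (X * (V * diagonal (fun j => (s j : ℂ)) * Vᴴ) * X * U)).trace := by
            simp only [Matrix.mul_assoc]
      _ = (X * (V * diagonal (fun j => (s j : ℂ)) * Vᴴ) * X * (U * Uᴴ)).trace := by
            rw [trace_mul_comm]; simp only [Matrix.mul_assoc]
      _ = _ := by rw [hU, Matrix.mul_one]
  have h3 : ∑ k, ∑ j, (r j : ℂ) * (star (Y k j) * Y k j) = (X * α * X).trace := by
    rw [sum_mul_star_mul_right, hY, hα]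
    simp only [conjTranspose_mul, conjTranspose_conjTranspose, hXH]
    calc _ = (Vᴴ * (X * (U * diagonal (fun j => (r j : ℂ)) * Uᴴ) * X * V)).trace := by
            simp only [Matrix.mul_assoc]
      _ = (X * (U * diagonal (fun j => (r j : ℂ)) * Uᴴ) * X * (V * Vᴴ)).trace := by
            rw [trace_mul_comm]; simp only [Matrix.mul_assoc]
      _ = _ := by rw [hV, Matrix.mul_one]
  have h4 : ∑ k, ∑ j, (r j : ℂ) * (star (M k j) * Y k j) = (X * α).trace := by
    rw [sum_mul_star_mul_right, hY, hM, hα]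
    simp only [conjTranspose_mul, conjTranspose_conjTranspose]
    calc _ = (Vᴴ * (X * (U * diagonal (fun j => (r j : ℂ)) * Uᴴ) * V)).trace := by
            simp only [Matrix.mul_assoc]
      _ = (X * (U * diagonal (fun j => (r j : ℂ)) * Uᴴ) * (V * Vᴴ)).trace := by
            rw [trace_mul_comm]; simp only [Matrix.mul_assoc]
      _ = _ := by rw [hV, Matrix.mul_one]
  have e2 := congrArg Complex.re h2
  have e3 := congrArg Complex.re h3
  have e4 := congrArg Complex.re h4
  simp only [star_mul_self_eq_normSq, ← Complex.ofReal_mul, ← Complex.ofReal_sum,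
    Complex.ofReal_re] at e2 e3
  simp only [Complex.re_sum, Complex.re_ofReal_mul] at e4
  simp only [trace, diag_apply, hX, diagonal_mul, mul_diagonal, Complex.re_sum,
    Complex.re_ofReal_mul, Complex.re_mul_ofReal] at e2 e3 e4
  have : ∑ k, ∑ j, (((1 - t) * s k + t * r j) * ‖Y k j‖ ^ 2
        - 2 * (r j * (star (M k j) * Y k j).re)) =
      (1 - t) * ∑ k, ∑ j, s k * ‖Y k j‖ ^ 2 + t * ∑ k, ∑ j, r j * ‖Y k j‖ ^ 2
        - 2 * ∑ k, ∑ j, r j * (star (M k j) * Y k j).re := by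
    simp only [Finset.mul_sum, ← Finset.sum_add_distrib, ← Finset.sum_sub_distrib]
    refine Finset.sum_congr rfl fun j _ => Finset.sum_congr rfl fun k _ => by ring
  rw [this, e2, e3, e4]
  simp only [Finset.mul_sum, ← Finset.sum_add_distrib, ← Finset.sum_sub_distrib]
  refine Finset.sum_congr rfl fun j _ => by ring

lemma sum_normSq_mul (hV : V * Vᴴ = 1)
    (hα : α = U * diagonal (fun j => (r j : ℂ)) * Uᴴ) :
    ∑ k, ∑ j, ‖(Vᴴ * U) k j‖ ^ 2 * r j = ∑ i, (α i i).re := by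
  have h : ∑ k, ∑ j, (r j : ℂ) * (star ((Vᴴ * U) k j) * (Vᴴ * U) k j) = α.trace := by
    rw [sum_mul_star_mul_right, hα]
    simp only [conjTranspose_mul, conjTranspose_conjTranspose]
    calc _ = (Vᴴ * ((U * diagonal (fun j => (r j : ℂ)) * Uᴴ) * V)).trace := by
            simp only [Matrix.mul_assoc]
      _ = ((U * diagonal (fun j => (r j : ℂ)) * Uᴴ) * (V * Vᴴ)).trace := by
            rw [trace_mul_comm]; simp only [Matrix.mul_assoc]
      _ = _ := by rw [hV, Matrix.mul_one]
  have e := congrArg Complex.re h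
  simp only [star_mul_self_eq_normSq, ← Complex.ofReal_mul, ← Complex.ofReal_sum,
    Complex.ofReal_re] at e
  simp only [trace, diag_apply, Complex.re_sum] at e
  rw [← e]
  refine Finset.sum_congr rfl fun j _ => Finset.sum_congr rfl fun k _ => by ring

lemma norm_sub_smul_sq (d r : ℝ) (hd : d = 0 → r = 0) (y m : ℂ) :
    d * ‖y - ((r / d : ℝ) : ℂ) * m‖ ^ 2 =
      (d * ‖y‖ ^ 2 - 2 * (r * (star m * y).re)) + ‖m‖ ^ 2 * (r ^ 2 / d) := by
  by_cases h : d = 0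
  · simp [h, hd h]
  · simp only [← Complex.normSq_eq_norm_sq, Complex.normSq_apply]
    simp
    field_simp
    ring

/-- Equality in the monotonicity of relative entropy under a measurement in the standard basis
forces `α = β * diagonal q`, where `q` is the ratio of the diagonals. -/
theorem mul_diagonal_eq_of_relEntropy_eq
    (hU : U * Uᴴ = 1) (hV : V * Vᴴ = 1)
    (hα : α = U * diagonal (fun j => (r j : ℂ)) * Uᴴ)
    (hβ : β = V * diagonal (fun j => (s j : ℂ)) * Vᴴ)
    (hr : ∀ j, 0 ≤ r j) (hs : ∀ j, 0 ≤ s j) (hq : ∀ i, 0 ≤ q i)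
    (hdiag : ∀ i, (α i i).re = q i * (β i i).re)
    (hsupp : ∀ k j, s k = 0 → ‖(Vᴴ * U) k j‖ ^ 2 * r j = 0)
    (heq : ∑ k, ∑ j, ‖(Vᴴ * U) k j‖ ^ 2 * r j * (Real.log (r j) - Real.log (s k)) =
      ∑ i, (α i i).re * Real.log (q i)) :
    β * diagonal (fun i => (q i : ℂ)) = α := by
  set M := Vᴴ * U with hM
  let f : ℝ → ℝ := fun t =>
    ∑ k, ∑ j, ‖M k j‖ ^ 2 * r j * Real.log ((1 - t) * s k + t * r j) -
      ∑ i, (α i i).re * Real.log ((1 - t) + t * q i)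
  let f' : ℝ → ℝ := fun t =>
    ∑ k, ∑ j, ‖M k j‖ ^ 2 * r j * ((r j - s k) / ((1 - t) * s k + t * r j)) -
      ∑ i, (α i i).re * ((q i - 1) / ((1 - t) + t * q i))
  have hf01 : f 1 = f 0 := by
    have : f 1 - f 0 = 0 := by
      simp only [f]
      simp only [sub_self, zero_mul, one_mul, zero_add, sub_zero, add_zero, Real.log_one,
        mul_zero, Finset.sum_const_zero]
      rw [sub_right_comm, sub_eq_zero, ← heq]
      simp only [← Finset.sum_sub_distrib, mul_sub]
    linarith
  have hfc : ContinuousOn f (Set.Icc 0 1) := by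
    refine ContinuousOn.sub (continuousOn_finsetSum _ fun k _ => continuousOn_finsetSum _
      fun j _ => ?_) (continuousOn_finsetSum _ fun i _ => ?_)
    · by_cases h0 : ‖M k j‖ ^ 2 * r j = 0
      · simp only [h0, zero_mul]; exact continuousOn_const
      · have hsk : 0 < s k := lt_of_le_of_ne (hs k) fun h => h0 (hsupp k j h.symm)
        have hrj : 0 < r j := lt_of_le_of_ne (hr j) fun h => h0 (by simp [← h])
        refine continuousOn_const.mul (ContinuousOn.log (by fun_prop) fun t ht => ?_)
        rcases eq_or_lt_of_le ht.1 with h | h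
        · simp [← h, hsk.ne']
        · have := mul_pos h hrj
          have := mul_nonneg (sub_nonneg.2 ht.2) hsk.le
          linarith
    · by_cases h0 : q i = 0
      · simp only [hdiag, h0, zero_mul]; exact continuousOn_const
      · have hqi : 0 < q i := lt_of_le_of_ne (hq i) (Ne.symm h0)
        refine continuousOn_const.mul (ContinuousOn.log (by fun_prop) fun t ht => ?_)
        rcases eq_or_lt_of_le ht.1 with h | h
        · simp [← h]
        · have := mul_pos h hqi
          have := sub_nonneg.2 ht.2
          linarith
  have hepos : ∀ t ∈ Set.Ioo (0 : ℝ) 1, ∀ i, 0 < (1 - t) + t * q i := fun t ht i => by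
    have := mul_nonneg ht.1.le (hq i)
    have := ht.2
    linarith
  have hdpos : ∀ t ∈ Set.Ioo (0 : ℝ) 1, ∀ k j, (1 - t) * s k + t * r j = 0 → r j = 0 := by
    intro t ht k j h
    have h1 := mul_nonneg ht.1.le (hr j)
    have h2 := mul_nonneg (sub_nonneg.2 ht.2.le) (hs k)
    have : t * r j = 0 := by linarith
    exact (mul_eq_zero.1 this).resolve_left ht.1.ne'
  have hfd : ∀ t ∈ Set.Ioo (0 : ℝ) 1, HasDerivAt f (f' t) t := by
    intro t ht
    refine HasDerivAt.sub (HasDerivAt.fun_sum fun k _ => HasDerivAt.fun_sum fun j _ => ?_)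
      (HasDerivAt.fun_sum fun i _ => ?_)
    · by_cases h0 : (1 - t) * s k + t * r j = 0
      · simp only [hdpos t ht k j h0, mul_zero, zero_mul]; exact hasDerivAt_const _ _
      · refine HasDerivAt.const_mul _ (HasDerivAt.log ?_ h0)
        exact ((((hasDerivAt_id' t).const_sub 1).mul_const (s k)).fun_add
          ((hasDerivAt_id' t).mul_const (r j))).congr_deriv (by ring)
    · refine HasDerivAt.const_mul _ (HasDerivAt.log ?_ (hepos t ht i).ne')
      exact (((hasDerivAt_id' t).const_sub 1).fun_add
        ((hasDerivAt_id' t).mul_const (q i))).congr_deriv (by ring)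
  let c : ℝ → N → ℝ := fun t i => q i / ((1 - t) + t * q i)
  let Y : ℝ → Matrix N N ℂ := fun t => Vᴴ * diagonal (fun i => (c t i : ℂ)) * U
  have hkey : ∀ t ∈ Set.Ioo (0 : ℝ) 1, (1 - t) * f' t =
      ∑ k, ∑ j, ((1 - t) * s k + t * r j) *
        ‖Y t k j - ((r j / ((1 - t) * s k + t * r j) : ℝ) : ℂ) * M k j‖ ^ 2 := by
    intro t ht
    have hL : ∑ k, ∑ j, ((1 - t) * s k + t * r j) *
        ‖Y t k j - ((r j / ((1 - t) * s k + t * r j) : ℝ) : ℂ) * M k j‖ ^ 2 =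
        ∑ i, (c t i ^ 2 * ((1 - t) * (β i i).re + t * (α i i).re) - 2 * (c t i * (α i i).re)) +
        ∑ k, ∑ j, ‖M k j‖ ^ 2 * (r j ^ 2 / ((1 - t) * s k + t * r j)) := by
      rw [← sum_sq_completed hU hV hα hβ (c t) t]
      simp only [← Finset.sum_add_distrib]
      refine Finset.sum_congr rfl fun k _ => Finset.sum_congr rfl fun j _ => ?_
      rw [norm_sub_smul_sq _ _ (hdpos t ht k j)]
    have hA : (1 - t) * ∑ k, ∑ j, ‖M k j‖ ^ 2 * r j *
          ((r j - s k) / ((1 - t) * s k + t * r j)) =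
        ∑ k, ∑ j, ‖M k j‖ ^ 2 * (r j ^ 2 / ((1 - t) * s k + t * r j)) - ∑ i, (α i i).re := by
      rw [← sum_normSq_mul hV hα]
      simp only [Finset.mul_sum, ← Finset.sum_sub_distrib]
      refine Finset.sum_congr rfl fun k _ => Finset.sum_congr rfl fun j _ => ?_
      by_cases h0 : (1 - t) * s k + t * r j = 0
      · simp [hdpos t ht k j h0]
      · field_simp
        ring
    have hB : (1 - t) * ∑ i, (α i i).re * ((q i - 1) / ((1 - t) + t * q i)) =
        -∑ i, (c t i ^ 2 * ((1 - t) * (β i i).re + t * (α i i).re)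
          - 2 * (c t i * (α i i).re)) - ∑ i, (α i i).re := by
      rw [← Finset.sum_neg_distrib]
      simp only [Finset.mul_sum, ← Finset.sum_sub_distrib]
      refine Finset.sum_congr rfl fun i _ => ?_
      have := (hepos t ht i).ne'
      simp only [c, hdiag]
      field_simp
      ring
    rw [hL]
    simp only [f']
    rw [mul_sub, hA, hB]
    ring
  have hterm : ∀ t ∈ Set.Ioo (0 : ℝ) 1, ∀ k j, 0 ≤ ((1 - t) * s k + t * r j) *
      ‖Y t k j - ((r j / ((1 - t) * s k + t * r j) : ℝ) : ℂ) * M k j‖ ^ 2 := by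
    intro t ht k j
    have h1 := mul_nonneg ht.1.le (hr j)
    have h2 := mul_nonneg (sub_nonneg.2 ht.2.le) (hs k)
    positivity
  have hderiv_nonneg : ∀ t ∈ Set.Ioo (0 : ℝ) 1, 0 ≤ f' t := by
    intro t ht
    have h1 : 0 < 1 - t := sub_pos.2 ht.2
    refine nonneg_of_mul_nonneg_right (b := f' t) ?_ h1
    rw [hkey t ht]
    exact Finset.sum_nonneg fun k _ => Finset.sum_nonneg fun j _ => hterm t ht k j
  have hderiv_zero := eq_zero_deriv_of_monotone_of_eq hfc hfd hderiv_nonneg hf01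
  have hlin : ∀ t ∈ Set.Ioo (0 : ℝ) 1, ∀ k j,
      (((1 - t) * s k + t * r j : ℝ) : ℂ) * Y t k j = r j * M k j := by
    intro t ht k j
    have h := hkey t ht
    rw [hderiv_zero t ht, mul_zero, eq_comm, Finset.sum_eq_zero_iff_of_nonneg
      fun k _ => Finset.sum_nonneg fun j _ => hterm t ht k j] at h
    have h := (Finset.sum_eq_zero_iff_of_nonneg fun j _ => hterm t ht k j).1
      (h k (Finset.mem_univ _)) j (Finset.mem_univ _)
    by_cases h0 : (1 - t) * s k + t * r j = 0
    · rw [h0, hdpos t ht k j h0]; simp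
    · have h := (mul_eq_zero.1 h).resolve_left h0
      have h := sub_eq_zero.1 (norm_eq_zero.1 (pow_eq_zero_iff two_ne_zero |>.1 h))
      have h0' : (((1 - t) * s k + t * r j : ℝ) : ℂ) ≠ 0 := by exact_mod_cast h0
      rw [h, Complex.ofReal_div]
      field_simp
  have hmat : ∀ t ∈ Set.Ioo (0 : ℝ) 1,
      ((1 - t : ℝ) : ℂ) • (β * diagonal (fun i => (c t i : ℂ))) +
        ((t : ℝ) : ℂ) • (diagonal (fun i => (c t i : ℂ)) * α) = α := by
    intro t ht
    have h : ((1 - t : ℝ) : ℂ) • (diagonal (fun j => (s j : ℂ)) * Y t) +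
        ((t : ℝ) : ℂ) • (Y t * diagonal (fun j => (r j : ℂ))) =
        M * diagonal (fun j => (r j : ℂ)) := by
      ext k j
      have := hlin t ht k j
      simp only [Matrix.add_apply, Matrix.smul_apply, diagonal_mul, mul_diagonal, smul_eq_mul]
      push_cast at this ⊢
      linear_combination this
    have h := congrArg (fun Z => V * Z * Uᴴ) h
    simp only [Matrix.mul_add, Matrix.add_mul, Matrix.mul_smul, Matrix.smul_mul, Y, hM] at h
    have e1 : V * (diagonal (fun j => (s j : ℂ)) *
        (Vᴴ * diagonal (fun i => (c t i : ℂ)) * U)) * Uᴴ =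
        β * diagonal (fun i => (c t i : ℂ)) := by
      calc _ = (V * diagonal (fun j => (s j : ℂ)) * Vᴴ) * diagonal (fun i => (c t i : ℂ)) *
            (U * Uᴴ) := by simp only [Matrix.mul_assoc]
        _ = _ := by rw [hU, Matrix.mul_one, hβ]
    have e2 : V * (Vᴴ * diagonal (fun i => (c t i : ℂ)) * U *
        diagonal (fun j => (r j : ℂ))) * Uᴴ = diagonal (fun i => (c t i : ℂ)) * α := by
      calc _ = (V * Vᴴ) * (diagonal (fun i => (c t i : ℂ)) *
            (U * diagonal (fun j => (r j : ℂ)) * Uᴴ)) := by simp only [Matrix.mul_assoc]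
        _ = _ := by rw [hV, Matrix.one_mul, hα]
    have e3 : V * (Vᴴ * U * diagonal (fun j => (r j : ℂ))) * Uᴴ = α := by
      calc _ = (V * Vᴴ) * (U * diagonal (fun j => (r j : ℂ)) * Uᴴ) := by
            simp only [Matrix.mul_assoc]
        _ = _ := by rw [hV, Matrix.one_mul, hα]
    rwa [e1, e2, e3] at h
  ext i j
  have hcc : ∀ i, ContinuousAt (fun t => c t i) 0 := fun i =>
    ContinuousAt.div (by fun_prop) (by fun_prop) (by simp)
  have hlim : ContinuousAt (fun t : ℝ => ((1 - t : ℝ) : ℂ) * (β i j * (c t j : ℂ)) +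
      ((t : ℝ) : ℂ) * ((c t i : ℂ) * α i j)) 0 := by
    have h1 : ContinuousAt (fun t => (c t i : ℂ)) 0 :=
      Complex.continuous_ofReal.continuousAt.comp (hcc i)
    have h2 : ContinuousAt (fun t => (c t j : ℂ)) 0 :=
      Complex.continuous_ofReal.continuousAt.comp (hcc j)
    fun_prop
  have hlim' := hlim.tendsto.mono_left (nhdsWithin_le_nhds (s := Set.Ioi (0 : ℝ)))
  have hc0 : ∀ᶠ t in nhdsWithin (0 : ℝ) (Set.Ioi 0), α i j =
      ((1 - t : ℝ) : ℂ) * (β i j * (c t j : ℂ)) + ((t : ℝ) : ℂ) * ((c t i : ℂ) * α i j) := by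
    filter_upwards [Ioo_mem_nhdsGT (zero_lt_one (α := ℝ))] with t ht
    have := congrFun (congrFun (hmat t ht) i) j
    simp only [Matrix.add_apply, Matrix.smul_apply, diagonal_mul, mul_diagonal, smul_eq_mul] at this
    exact this.symm
  have := tendsto_nhds_unique (tendsto_const_nhds.congr' hc0) hlim'
  rw [mul_diagonal, this]
  simp [c]

end equality

section cq

variable {n X : Type*} [Fintype n] [DecidableEq n] [Fintype X] [DecidableEq X]

lemma spectral_eq {A : Matrix n n ℂ} (hA : A.IsHermitian) :
    A = (hA.eigenvectorUnitary : Matrix n n ℂ) * diagonal (fun j => (hA.eigenvalues j : ℂ)) *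
      (hA.eigenvectorUnitary : Matrix n n ℂ)ᴴ := by
  have := hA.spectral_theorem
  rwa [Unitary.conjStarAlgAut_apply] at this

open scoped MatrixOrder in
lemma posSemidef_blockDiagonal {σ : X → Matrix n n ℂ} (hσ : ∀ x, (σ x).PosSemidef) :
    (blockDiagonal σ).PosSemidef := by
  choose B hB using fun x => CStarAlgebra.nonneg_iff_eq_star_mul_self.1 (hσ x).nonneg
  have : blockDiagonal σ = (blockDiagonal B)ᴴ * blockDiagonal B := by
    rw [blockDiagonal_conjTranspose, ← blockDiagonal_mul]
    congr 1
    ext1 x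
    exact hB x
  rw [this]
  exact posSemidef_conjTranspose_mul_self _

lemma vonNeumannEntropy_eq {A : Matrix n n ℂ} (hA : A.IsHermitian) :
    vonNeumannEntropy A =
      -(∑ j, hA.eigenvalues j * Real.log (hA.eigenvalues j)) / Real.log 2 := by
  rw [vonNeumannEntropy, dif_pos hA, shannonEntropy, neg_div, Finset.sum_div]
  simp only [Real.logb, mul_div_assoc]

lemma sum_normSq_col {M : Matrix n n ℂ} (hM : Mᴴ * M = 1) (j : n) :
    ∑ k, ‖M k j‖ ^ 2 = 1 := by
  have h := congrFun (congrFun hM j) j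
  simp only [mul_apply, conjTranspose_apply, one_apply_eq] at h
  simp only [star_mul_self_eq_normSq] at h
  exact_mod_cast h

lemma sum_normSq_row {M : Matrix n n ℂ} (r : n → ℝ) (k : n) :
    ((∑ j, ‖M k j‖ ^ 2 * r j : ℝ) : ℂ) = (M * diagonal (fun j => (r j : ℂ)) * Mᴴ) k k := by
  simp only [mul_apply (M := _ * diagonal _), mul_diagonal, conjTranspose_apply,
    Complex.ofReal_sum, Complex.ofReal_mul,
    ← star_mul_self_eq_normSq]
  exact Finset.sum_congr rfl fun j _ => by ring

/-- If the conditional entropy of a cq-state equals the one obtained after measuring the quantum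
register in the standard basis, then every block is the average state times a diagonal matrix. -/
theorem sum_mul_diagonal_eq_of_entropy_eq {σ : X → Matrix n n ℂ}
    (hσ : ∀ x, (σ x).PosSemidef) (q : n → X → ℝ) (hq : ∀ i x, 0 ≤ q i x)
    (hdiag : ∀ i x, (σ x i i).re = q i x * ((∑ x, σ x) i i).re)
    (hS : vonNeumannEntropy (∑ x, σ x) - vonNeumannEntropy (blockDiagonal σ) =
      (∑ x, ∑ i, (σ x i i).re * Real.log (q i x)) / Real.log 2) (x : X) (i j : n) :
    (∑ x, σ x) i j * (q j x : ℂ) = σ x i j := by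
  set ρ := ∑ x, σ x with hρ
  set α := blockDiagonal σ with hα
  have hρp : ρ.PosSemidef := posSemidef_sum _ fun x _ => hσ x
  have hαp : α.PosSemidef := posSemidef_blockDiagonal hσ
  set r := hαp.1.eigenvalues with hr
  set s := hρp.1.eigenvalues with hs
  set U : Matrix (n × X) (n × X) ℂ := hαp.1.eigenvectorUnitary.1 with hUdef
  set W : Matrix n n ℂ := hρp.1.eigenvectorUnitary.1 with hWdef
  set V : Matrix (n × X) (n × X) ℂ := blockDiagonal fun _ => W with hVdef
  have hαs : α = U * diagonal (fun j => (r j : ℂ)) * Uᴴ := spectral_eq hαp.1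
  have hρs : ρ = W * diagonal (fun j => (s j : ℂ)) * Wᴴ := spectral_eq hρp.1
  have hU : U * Uᴴ = 1 := Unitary.coe_mul_star_self hαp.1.eigenvectorUnitary
  have hU' : Uᴴ * U = 1 := Unitary.coe_star_mul_self hαp.1.eigenvectorUnitary
  have hW : W * Wᴴ = 1 := Unitary.coe_mul_star_self hρp.1.eigenvectorUnitary
  have hW' : Wᴴ * W = 1 := Unitary.coe_star_mul_self hρp.1.eigenvectorUnitary
  have hV : V * Vᴴ = 1 := by
    rw [hVdef, blockDiagonal_conjTranspose, ← blockDiagonal_mul]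
    simp only [hW]
    exact blockDiagonal_one
  have hβs : (blockDiagonal fun _ : X => ρ) =
      V * diagonal (fun k => (s k.1 : ℂ)) * Vᴴ := by
    rw [hVdef, blockDiagonal_conjTranspose,
      ← blockDiagonal_diagonal (fun (_ : X) k => (s k : ℂ)), ← blockDiagonal_mul,
      ← blockDiagonal_mul]
    simp only [← hρs]
  set M := Vᴴ * U with hM
  have hMM : Mᴴ * M = 1 := by
    rw [hM, conjTranspose_mul, conjTranspose_conjTranspose]
    calc _ = Uᴴ * (V * Vᴴ) * U := by simp only [Matrix.mul_assoc]
      _ = 1 := by rw [hV, Matrix.mul_one, hU']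
  have hrow : ∀ k x, ((∑ j, ‖M (k, x) j‖ ^ 2 * r j : ℝ) : ℂ) = (Wᴴ * σ x * W) k k := by
    intro k x
    rw [sum_normSq_row]
    have : M * diagonal (fun j => (r j : ℂ)) * Mᴴ = Vᴴ * α * V := by
      rw [hαs, hM, conjTranspose_mul, conjTranspose_conjTranspose]
      simp only [Matrix.mul_assoc]
    rw [this, hα, hVdef, blockDiagonal_conjTranspose, ← blockDiagonal_mul, ← blockDiagonal_mul,
      blockDiagonal_apply_eq]
  have hrowsum : ∀ k, ∑ x, ∑ j, ‖M (k, x) j‖ ^ 2 * r j = s k := by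
    intro k
    have h1 : Wᴴ * ρ * W = diagonal (fun j => (s j : ℂ)) := by
      rw [hρs]
      calc _ = (Wᴴ * W) * diagonal (fun j => (s j : ℂ)) * (Wᴴ * W) := by
            simp only [Matrix.mul_assoc]
        _ = _ := by rw [hW', Matrix.one_mul, Matrix.mul_one]
    have h2 : ((∑ x, ∑ j, ‖M (k, x) j‖ ^ 2 * r j : ℝ) : ℂ) = (s k : ℂ) := by
      rw [Complex.ofReal_sum]
      simp only [hrow]
      rw [← Matrix.sum_apply, ← Finset.sum_mul, ← Finset.mul_sum, ← hρ, h1, diagonal_apply_eq]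
    exact_mod_cast h2
  have hr0 : ∀ j, 0 ≤ r j := hαp.eigenvalues_nonneg
  have hs0 : ∀ j, 0 ≤ s j := hρp.eigenvalues_nonneg
  have hnn : ∀ k j, 0 ≤ ‖M k j‖ ^ 2 * r j := fun k j => mul_nonneg (by positivity) (hr0 j)
  have key := mul_diagonal_eq_of_relEntropy_eq (q := fun i : n × X => q i.1 i.2) hU hV hαs hβs
    hr0 (fun k => hs0 k.1) (fun i => hq i.1 i.2) ?_ ?_ ?_
  · have := congrFun (congrFun key (i, x)) (j, x)
    rwa [mul_diagonal, blockDiagonal_apply_eq, hα, blockDiagonal_apply_eq] at this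
  · rintro ⟨i, x⟩
    rw [hα, blockDiagonal_apply_eq, blockDiagonal_apply_eq]
    exact hdiag i x
  · rintro ⟨k, x⟩ j hk
    have h := hrowsum k
    rw [show s k = 0 from hk] at h
    have h := (Finset.sum_eq_zero_iff_of_nonneg
      fun x _ => Finset.sum_nonneg fun j _ => hnn (k, x) j).1 h x (Finset.mem_univ _)
    exact (Finset.sum_eq_zero_iff_of_nonneg fun j _ => hnn (k, x) j).1 h j (Finset.mem_univ _)
  · have hlog : Real.log 2 ≠ 0 := (Real.log_pos one_lt_two).ne'
    rw [vonNeumannEntropy_eq hρp.1, vonNeumannEntropy_eq hαp.1, ← sub_div,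
      div_left_inj' hlog] at hS
    have hR : ∑ i : n × X, (α i i).re * Real.log (q i.1 i.2) =
        ∑ x, ∑ i, (σ x i i).re * Real.log (q i x) := by
      rw [Fintype.sum_prod_type_right]
      simp only [hα, blockDiagonal_apply_eq]
    rw [hR, ← hS]
    have h1 : ∑ k, ∑ j, ‖M k j‖ ^ 2 * r j * Real.log (r j) = ∑ j, r j * Real.log (r j) := by
      rw [Finset.sum_comm]
      refine Finset.sum_congr rfl fun j _ => ?_
      simp only [mul_assoc]
      rw [← Finset.sum_mul, sum_normSq_col hMM, one_mul]
    have h2 : ∑ k : n × X, ∑ j, ‖M k j‖ ^ 2 * r j * Real.log (s k.1) =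
        ∑ k, s k * Real.log (s k) := by
      rw [Fintype.sum_prod_type]
      refine Finset.sum_congr rfl fun k _ => ?_
      simp only [← Finset.sum_mul, hrowsum]
    simp only [mul_sub, Finset.sum_sub_distrib]
    refine (congrArg₂ (· - ·) h1 h2).trans ?_
    change _ = -∑ j, s j * Real.log (s j) - -∑ j, r j * Real.log (r j)
    ring

end cq

section blocks

set_option linter.unusedSectionVars false

variable {dA dB : ℕ} {P : 𝒳 × 𝒴 → ℝ} {φ : 𝒳 → 𝒴 → Fin dA × Fin dB → ℂ}

lemma posSemidef_blockX (x : 𝒳) : (blockX P φ x).PosSemidef := by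
  let B : Matrix (𝒴 × Fin dB) (Fin dA) ℂ := of fun p a =>
    (Real.sqrt (P (x, p.1)) : ℂ) * φ x p.1 (a, p.2)
  have : blockX P φ x = B * Bᴴ := by
    ext p q
    simp [blockX, B, mul_apply, conjTranspose_apply]
  rw [this]
  exact posSemidef_self_mul_conjTranspose _

lemma blockX_apply (x : 𝒳) (p q : 𝒴 × Fin dB) :
    blockX P φ x p q = ((Real.sqrt (P (x, p.1)) * Real.sqrt (P (x, q.1)) : ℝ) : ℂ) *
      ∑ a, φ x p.1 (a, p.2) * (starRingEnd ℂ) (φ x q.1 (a, q.2)) := by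
  simp only [blockX, Finset.mul_sum, map_mul, Complex.conj_ofReal, Complex.ofReal_mul]
  exact Finset.sum_congr rfl fun a _ => by ring

lemma blockX_diag_re (hP0 : ∀ p, 0 ≤ P p) (x : 𝒳) (y : 𝒴) (b : Fin dB) :
    (blockX P φ x (y, b) (y, b)).re = P (x, y) * ∑ a, ‖φ x y (a, b)‖ ^ 2 := by
  rw [blockX_apply, Complex.re_ofReal_mul, Real.mul_self_sqrt (hP0 _), Complex.re_sum]
  congr 1
  refine Finset.sum_congr rfl fun a _ => ?_
  rw [Complex.mul_conj, Complex.ofReal_re, Complex.normSq_eq_norm_sq]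

/-- Two vectors with the same nonzero `A`-marginal have a nonzero cross term after tracing
out `A`. -/
lemma exists_cross_ne_zero {u v : Fin dA × Fin dB → ℂ} (hu : ∑ i, ‖u i‖ ^ 2 = 1)
    (huv : trRight (outer u) = trRight (outer v)) :
    ∃ b b', ∑ a, u (a, b) * (starRingEnd ℂ) (v (a, b')) ≠ 0 := by
  by_contra! h
  let A : Matrix (Fin dA) (Fin dB) ℂ := of fun a b => u (a, b)
  let B : Matrix (Fin dA) (Fin dB) ℂ := of fun a b => v (a, b)
  have hAB : A * Aᴴ = B * Bᴴ := by
    ext i j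
    have := congrFun (congrFun huv i) j
    simpa [trRight, outer, mul_apply, A, B] using this
  have hBA : Bᴴ * A = 0 := by
    ext b' b
    have := h b b'
    simp only [mul_apply, conjTranspose_apply, Matrix.zero_apply, of_apply, A, B]
    rw [← this]
    exact Finset.sum_congr rfl fun a _ => mul_comm _ _
  have hsq : (A * Aᴴ)ᴴ * (A * Aᴴ) = 0 := by
    have h1 : (A * Aᴴ)ᴴ = B * Bᴴ := by simp [hAB]
    calc _ = B * (Bᴴ * A) * Aᴴ := by rw [h1]; simp only [Matrix.mul_assoc]
      _ = 0 := by rw [hBA]; simp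
  have hA : A = 0 :=
    self_mul_conjTranspose_eq_zero.1 (conjTranspose_mul_self_eq_zero.1 hsq)
  have hu0 : ∀ i, u i = 0 := fun i => congrFun (congrFun hA i.1) i.2
  simp [hu0] at hu

lemma le_margY (hP0 : ∀ p, 0 ≤ P p) (x : 𝒳) (y : 𝒴) :
    P (x, y) ≤ margY P y :=
  Finset.single_le_sum (f := fun x => P (x, y)) (fun x _ => hP0 (x, y)) (Finset.mem_univ x)

lemma shannonEntropy_margY_sub (hP0 : ∀ p, 0 ≤ P p) :
    shannonEntropy (margY P) - shannonEntropy P =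
      (∑ x, ∑ y, P (x, y) * Real.log (P (x, y) / margY P y)) / Real.log 2 := by
  have h1 : shannonEntropy (margY P) =
      -(∑ x, ∑ y, P (x, y) * Real.log (margY P y)) / Real.log 2 := by
    rw [Finset.sum_comm, shannonEntropy, neg_div, Finset.sum_div]
    simp only [← Finset.sum_mul, Real.logb, mul_div_assoc]
    rfl
  have h2 : shannonEntropy P = -(∑ x, ∑ y, P (x, y) * Real.log (P (x, y))) / Real.log 2 := by
    rw [shannonEntropy, neg_div,
      ← Fintype.sum_prod_type' (fun x y => P (x, y) * Real.log (P (x, y))), Finset.sum_div]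
    simp only [Real.logb, mul_div_assoc]
  rw [h1, h2, ← sub_div, neg_sub_neg]
  simp only [← Finset.sum_sub_distrib]
  congr 1
  refine Finset.sum_congr rfl fun x _ => Finset.sum_congr rfl fun y _ => ?_
  rcases (hP0 (x, y)).eq_or_lt with h | h
  · simp [← h]
  · rw [Real.log_div h.ne' (h.trans_le (le_margY hP0 x y)).ne']
    ring

lemma depCondEntropyX_eq_zero (hP0 : ∀ p, 0 ≤ P p)
    (h : ∀ x x' y, 0 < P (x, y) → 0 < P (x', y) → condYX P x' = condYX P x) :
    depCondEntropyX P = 0 := by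
  rw [depCondEntropyX, neg_eq_zero]
  refine Finset.sum_eq_zero fun p _ => ?_
  obtain ⟨x, y⟩ := p
  rcases (hP0 (x, y)).eq_or_lt with h0 | h0
  · simp [← h0]
  · have hs : ∑ x' ∈ Finset.univ.filter fun x' => condYX P x' = condYX P x, P (x', y) =
        margY P y := by
      refine Finset.sum_subset (Finset.filter_subset _ _) fun x' _ hx' => ?_
      by_contra hne
      exact hx' (Finset.mem_filter.2 ⟨Finset.mem_univ _,
        h x x' y h0 ((hP0 _).lt_of_ne (Ne.symm hne))⟩)
    rw [hs, div_self (h0.trans_le (le_margY hP0 x y)).ne', Real.logb_one, mul_zero]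

end blocks

/-- if some embedding of `P` has zero leakage, i.e.
`S(X;BB')_ψ = I(X;Y)`, then `P` is trivial: `H(X↘Y | Y) = 0`. -/
theorem zero_leakage_implies_trivial {dA dB : ℕ}
    (P : 𝒳 × 𝒴 → ℝ) (hP0 : ∀ p, 0 ≤ P p) (hP1 : ∑ p, P p = 1)
    (φ : 𝒳 → 𝒴 → Fin dA × Fin dB → ℂ)
    (hunit : ∀ x y, 0 < P (x, y) → ∑ v, ‖φ x y v‖ ^ 2 = 1)
    (hcorrA : ∀ x y y', 0 < P (x, y) → 0 < P (x, y') →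
      trRight (outer (φ x y)) = trRight (outer (φ x y')))
    (hcorrB : ∀ x x' y, 0 < P (x, y) → 0 < P (x', y) →
      trLeft (outer (φ x y)) = trLeft (outer (φ x' y)))
    (hNoLeak : SXBB P φ = mutualInfo P) :
    depCondEntropyX P = 0 := by
  have hω : ∀ x x' y b, 0 < P (x, y) → 0 < P (x', y) →
      ∑ a, ‖φ x y (a, b)‖ ^ 2 = ∑ a, ‖φ x' y (a, b)‖ ^ 2 := by
    intro x x' y b h h'
    have := congrFun (congrFun (hcorrB x x' y h h') b) b
    simp only [trLeft, outer, Complex.mul_conj, Complex.normSq_eq_norm_sq] at this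
    exact_mod_cast this
  have hq : ∀ (i : 𝒴 × Fin dB) x, 0 ≤ P (x, i.1) / margY P i.1 := fun i x =>
    div_nonneg (hP0 _) (Finset.sum_nonneg fun x _ => hP0 _)
  have hdiag : ∀ (i : 𝒴 × Fin dB) x, (blockX P φ x i i).re =
      P (x, i.1) / margY P i.1 * ((∑ x, blockX P φ x) i i).re := by
    rintro ⟨y, b⟩ x
    rw [Matrix.sum_apply, Complex.re_sum]
    simp only [blockX_diag_re hP0]
    rcases (hP0 (x, y)).eq_or_lt with h | h
    · simp [← h]
    · have hsum : ∑ x', P (x', y) * ∑ a, ‖φ x' y (a, b)‖ ^ 2 =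
          margY P y * ∑ a, ‖φ x y (a, b)‖ ^ 2 := by
        rw [margY, Finset.sum_mul]
        refine Finset.sum_congr rfl fun x' _ => ?_
        rcases (hP0 (x', y)).eq_or_lt with h' | h'
        · simp [← h']
        · rw [hω x' x y b h' h]
      have := (h.trans_le (le_margY hP0 x y)).ne'
      rw [hsum]
      field_simp
  have hS : vonNeumannEntropy (∑ x, blockX P φ x) -
      vonNeumannEntropy (blockDiagonal (blockX P φ)) =
      (∑ x, ∑ i : 𝒴 × Fin dB, (blockX P φ x i i).re * Real.log (P (x, i.1) / margY P i.1)) /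
        Real.log 2 := by
    have h1 : vonNeumannEntropy (∑ x, blockX P φ x) -
        vonNeumannEntropy (blockDiagonal (blockX P φ)) =
        shannonEntropy (margY P) - shannonEntropy P := by
      simp only [SXBB, mutualInfo] at hNoLeak
      linarith
    rw [h1, shannonEntropy_margY_sub hP0]
    congr 1
    refine Finset.sum_congr rfl fun x _ => ?_
    rw [Fintype.sum_prod_type]
    refine Finset.sum_congr rfl fun y _ => ?_
    simp only [blockX_diag_re hP0]
    rw [← Finset.sum_mul, ← Finset.mul_sum]
    rcases (hP0 (x, y)).eq_or_lt with h | h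
    · simp [← h]
    · have := hunit x y h
      rw [Fintype.sum_prod_type_right] at this
      rw [this, mul_one]
  have hright := sum_mul_diagonal_eq_of_entropy_eq (σ := blockX P φ) posSemidef_blockX
    (fun i x => P (x, i.1) / margY P i.1) hq hdiag hS
  have hρ : (∑ x, blockX P φ x).IsHermitian :=
    (posSemidef_sum _ fun x _ => posSemidef_blockX x).1
  have hleft : ∀ x i j, (∑ x, blockX P φ x) i j * ((P (x, i.1) / margY P i.1 : ℝ) : ℂ) =
      blockX P φ x i j := by
    intro x i j
    have := congrArg star (hright x j i)
    rwa [star_mul', hρ.apply, (posSemidef_blockX x).1.apply, Complex.star_def,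
      Complex.conj_ofReal] at this
  have hcond : ∀ x y y', 0 < P (x, y) → 0 < P (x, y') → ∀ x',
      P (x', y) / margY P y = P (x', y') / margY P y' := by
    intro x y y' h h' x'
    obtain ⟨b, b', hne⟩ := exists_cross_ne_zero (hunit x y h) (hcorrA x y y' h h')
    have hblock : blockX P φ x (y, b) (y', b') ≠ 0 := by
      rw [blockX_apply]
      refine mul_ne_zero (Complex.ofReal_ne_zero.2 ?_) hne
      exact (mul_pos (Real.sqrt_pos.2 h) (Real.sqrt_pos.2 h')).ne'
    rw [← hleft] at hblock
    have := (hleft x' (y, b) (y', b')).trans (hright x' (y, b) (y', b')).symm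
    exact_mod_cast mul_left_cancel₀ (left_ne_zero_of_mul hblock) this
  have hpos : ∀ x x' y y', 0 < P (x, y) → 0 < P (x', y) → 0 < P (x, y') → 0 < P (x', y') := by
    intro x x' y y' h1 h2 h3
    have h := hcond x y y' h1 h3 x'
    refine (hP0 _).lt_of_ne fun h0 => ?_
    rw [← h0, zero_div] at h
    exact (div_pos h2 (h2.trans_le (le_margY hP0 x' y))).ne' h
  refine depCondEntropyX_eq_zero hP0 fun x x' y h h' => ?_
  have hprop : ∀ y', P (x', y') * P (x, y) = P (x, y') * P (x', y) := by
    intro y'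
    rcases (hP0 (x, y')).eq_or_lt with h0 | h0
    · have : P (x', y') = 0 := by
        by_contra hne
        exact (hpos x' x y y' h' h ((hP0 _).lt_of_ne (Ne.symm hne))).ne h0
      rw [this, ← h0, zero_mul, zero_mul]
    · have h1 := hcond x y y' h h0 x
      have h2 := hcond x y y' h h0 x'
      have m1 := (h.trans_le (le_margY hP0 x y)).ne'
      have m2 := (h0.trans_le (le_margY hP0 x y')).ne'
      rw [div_eq_div_iff m1 m2] at h1 h2
      refine mul_right_cancel₀ m1 ?_
      linear_combination P (x', y) * h1 - P (x, y) * h2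
  have hmarg : margX P x' * P (x, y) = margX P x * P (x', y) := by
    simp only [margX, Finset.sum_mul, hprop]
  have hX : ∀ z, 0 < P (z, y) → margX P z ≠ 0 := fun z hz =>
    (hz.trans_le (Finset.single_le_sum (f := fun y => P (z, y)) (fun y _ => hP0 (z, y))
      (Finset.mem_univ y))).ne'
  funext y'
  rw [condYX, condYX, div_eq_div_iff (hX x' h') (hX x h)]
  refine mul_right_cancel₀ h.ne' (mul_right_cancel₀ h'.ne' ?_)
  linear_combination margX P x * P (x', y) * hprop y' - P (x, y') * P (x', y) * hmarg

end
end

section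
/- Let 0 ≤ p < 1/2 − 1/(2√2) and let P^{OT_p} be the pmf on {0,1}² × {0,1}² defined by P((x₀,x₁),(c,y)) = (1−p)/8 if y = x_c and p/8 otherwise (randomized 1-out-of-2 oblivious transfer of bits where the selected bit passes through a binary symmetric channel with error rate p). Then every regular embedding of P^{OT_p} has leakage at least (1/2 − p − √(p(1−p)))² / (32·ln 2). -/
open scoped BigOperators
open Matrix
open scoped ComplexOrder

noncomputable section

variable {𝒳 𝒴 : Type*} [Fintype 𝒳] [Fintype 𝒴] [DecidableEq 𝒳] [DecidableEq 𝒴]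

/-- The regular embedding `|ψ_θ⟩ = Σ_{x,y} e^{iθ(x,y)} √P(x,y) |x⟩⊗|y⟩` of `P`. -/
def regEmbed (P : 𝒳 × 𝒴 → ℝ) (θ : 𝒳 × 𝒴 → ℝ) : 𝒳 × 𝒴 → ℂ :=
  fun p => Complex.exp ((θ p : ℂ) * Complex.I) * (Real.sqrt (P p) : ℂ)

/-- The leakage `Δ(ψ_θ) = S(tr_A |ψ_θ⟩⟨ψ_θ|) − I(X;Y)` of a regular embedding. -/
def regLeakage (P : 𝒳 × 𝒴 → ℝ) (θ : 𝒳 × 𝒴 → ℝ) : ℝ :=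
  vonNeumannEntropy (trLeft (outer (regEmbed P θ))) - mutualInfo P

/-- The leakage of the primitive `P`: minimal leakage over regular embeddings. -/
def primLeakage (P : 𝒳 × 𝒴 → ℝ) : ℝ := ⨅ θ : 𝒳 × 𝒴 → ℝ, regLeakage P θ


/-- The randomized noisy 1-out-of-2 OT primitive `P^{OT_p}` on `{0,1}² × {0,1}²`:
`P((x₀,x₁),(c,y)) = (1−p)/8` if `y = x_c` and `p/8` otherwise. -/
def PotNoisy (p : ℝ) : (Bool × Bool) × (Bool × Bool) → ℝ := fun q =>
  if q.2.2 = (if q.2.1 then q.1.2 else q.1.1) then (1 - p) / 8 else p / 8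

theorem trLeft_outer_eq_mul_conjTranspose {m n : Type*} [Fintype m] (ψ : m × n → ℂ) :
    trLeft (outer ψ) =
      (Matrix.of fun i a => ψ (a, i)) * (Matrix.of fun (i : n) (a : m) => ψ (a, i))ᴴ := by
  ext i j
  simp [trLeft, outer, Matrix.mul_apply]

theorem trLeft_outer_posSemidef {m n : Type*} [Fintype m] [Fintype n] (ψ : m × n → ℂ) :
    (trLeft (outer ψ)).PosSemidef := by
  rw [trLeft_outer_eq_mul_conjTranspose]
  exact Matrix.posSemidef_self_mul_conjTranspose _

theorem Matrix.IsHermitian.sum_eigenvalues_sq {n : Type*} [Fintype n] [DecidableEq n]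
    {A : Matrix n n ℂ} (hA : A.IsHermitian) :
    ∑ i, hA.eigenvalues i ^ 2 = ∑ i, ∑ j, ‖A i j‖ ^ 2 := by
  have h₁ : (A * A).trace = ∑ i, ((hA.eigenvalues i : ℂ)) ^ 2 := by
    conv_lhs => rw [hA.spectral_theorem]
    rw [← map_mul, Matrix.diagonal_mul_diagonal, Unitary.conjStarAlgAut_apply,
      Matrix.trace_mul_cycle]
    simp [Matrix.trace_diagonal, sq]
  have h₂ : (A * A).trace = ∑ i, ∑ j, ((‖A i j‖ : ℂ)) ^ 2 := by
    simp only [Matrix.trace, Matrix.diag, Matrix.mul_apply]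
    refine Finset.sum_congr rfl fun i _ => Finset.sum_congr rfl fun j _ => ?_
    rw [← hA.apply j i, ← Complex.mul_conj']
    rfl
  exact_mod_cast h₁.symm.trans h₂

/-- A purity bound: the tangent of the logarithm at `t` bounds the entropy from below. -/
theorem log_two_mul_vonNeumannEntropy_ge {n : Type*} [Fintype n] [DecidableEq n]
    {ρ : Matrix n n ℂ} (hρ : ρ.PosSemidef) (htr : ρ.trace = 1) {t : ℝ} (ht : 0 < t) :
    1 - Real.log t - (∑ i, ∑ j, ‖ρ i j‖ ^ 2) / t ≤ Real.log 2 * vonNeumannEntropy ρ := by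
  have h_sum : ∑ i, hρ.1.eigenvalues i = 1 := by
    have := hρ.1.trace_eq_sum_eigenvalues
    rw [htr, ← RCLike.ofReal_sum, ← RCLike.ofReal_one, RCLike.ofReal_inj] at this
    exact this.symm
  have h_two : Real.log 2 ≠ 0 := (Real.log_pos one_lt_two).ne'
  have h_term : ∀ i, hρ.1.eigenvalues i * Real.log (hρ.1.eigenvalues i) ≤
      (Real.log t - 1) * hρ.1.eigenvalues i + hρ.1.eigenvalues i ^ 2 / t := by
    intro i
    rcases (hρ.eigenvalues_nonneg i).eq_or_lt with h | h
    · simp [← h]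
    · have h_log := Real.log_le_sub_one_of_pos (div_pos h ht)
      rw [Real.log_div h.ne' ht.ne'] at h_log
      calc _ ≤ hρ.1.eigenvalues i * (Real.log t - 1 + hρ.1.eigenvalues i / t) :=
            mul_le_mul_of_nonneg_left (by linarith) h.le
        _ = _ := by ring
  have h_le := Finset.sum_le_sum fun i (_ : i ∈ Finset.univ) => h_term i
  rw [Finset.sum_add_distrib, ← Finset.mul_sum, ← Finset.sum_div, h_sum,
    hρ.1.sum_eigenvalues_sq] at h_le
  have h_eq : Real.log 2 * vonNeumannEntropy ρ =
      -∑ i, hρ.1.eigenvalues i * Real.log (hρ.1.eigenvalues i) := by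
    rw [vonNeumannEntropy, dif_pos hρ.1, shannonEntropy, mul_neg, Finset.mul_sum]
    refine congrArg _ (Finset.sum_congr rfl fun i _ => ?_)
    rw [Real.logb]
    field_simp
  rw [h_eq]
  linarith

theorem norm_regEmbed {m n : Type*} (P θ : m × n → ℝ) (q : m × n) :
    ‖regEmbed P θ q‖ = √(P q) := by
  simp [regEmbed, Complex.norm_exp_ofReal_mul_I, abs_of_nonneg (Real.sqrt_nonneg _)]

theorem norm_trLeft_regEmbed_le {m n : Type*} [Fintype m] (P θ : m × n → ℝ) (i j : n) :
    ‖trLeft (outer (regEmbed P θ)) i j‖ ≤ ∑ a, √(P (a, i)) * √(P (a, j)) := by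
  refine (norm_sum_le _ _).trans (Finset.sum_le_sum fun a _ => ?_)
  rw [outer, norm_mul, RCLike.norm_conj, norm_regEmbed, norm_regEmbed]

theorem trace_trLeft_regEmbed {m n : Type*} [Fintype m] [Fintype n] {P : m × n → ℝ}
    (hP : ∀ q, 0 ≤ P q) (θ : m × n → ℝ) :
    (trLeft (outer (regEmbed P θ))).trace = ((∑ i, ∑ a, P (a, i) : ℝ) : ℂ) := by
  simp only [Matrix.trace, Matrix.diag, trLeft, outer]
  push_cast
  refine Finset.sum_congr rfl fun i _ => Finset.sum_congr rfl fun a _ => ?_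
  rw [Complex.mul_conj', norm_regEmbed]
  norm_cast
  exact Real.sq_sqrt (hP _)

theorem PotNoisy_nonneg {p : ℝ} (hp0 : 0 ≤ p) (hp1 : p ≤ 1)
    (q : (Bool × Bool) × (Bool × Bool)) : 0 ≤ PotNoisy p q := by
  unfold PotNoisy
  split_ifs <;> linarith

theorem sum_PotNoisy (p : ℝ) : ∑ i, ∑ a, PotNoisy p (a, i) = 1 := by
  simp [PotNoisy, Fintype.sum_prod_type]
  ring

theorem sum_sq_overlap_PotNoisy {p : ℝ} (hp0 : 0 ≤ p) (hp1 : p ≤ 1) :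
    ∑ i, ∑ j, (∑ a, √(PotNoisy p (a, i)) * √(PotNoisy p (a, j))) ^ 2 =
      3 / 8 + √(p * (1 - p)) / 2 + 3 / 2 * √(p * (1 - p)) ^ 2 := by
  have h_sq_a := Real.mul_self_sqrt (show 0 ≤ (1 - p) / 8 by linarith)
  have h_sq_b := Real.mul_self_sqrt (show 0 ≤ p / 8 by linarith)
  have h_ab : √((1 - p) / 8) * √(p / 8) = √(p * (1 - p)) / 8 := by
    rw [← Real.sqrt_mul (by linarith), show (1 - p) / 8 * (p / 8) = p * (1 - p) / 8 ^ 2 by ring,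
      Real.sqrt_div' _ (by positivity), Real.sqrt_sq (by norm_num)]
  have h_ba := (mul_comm _ _).trans h_ab
  simp only [PotNoisy, Fintype.sum_prod_type, Fintype.sum_bool, Bool.false_eq_true,
    Bool.true_eq_false, if_true, if_false, h_sq_a, h_sq_b, h_ab, h_ba]
  ring

theorem log_two_mul_mutualInfo_PotNoisy {p : ℝ} (hp1 : p < 1) :
    Real.log 2 * mutualInfo (PotNoisy p) = Real.log 2 - Real.binEntropy p := by
  have h_two : Real.log 2 ≠ 0 := (Real.log_pos one_lt_two).ne'
  have h_four : Real.log 4 = 2 * Real.log 2 := by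
    rw [show (4 : ℝ) = 2 ^ 2 by norm_num, Real.log_pow]; norm_num
  have h_eight : Real.log 8 = 3 * Real.log 2 := by
    rw [show (8 : ℝ) = 2 ^ 3 by norm_num, Real.log_pow]; norm_num
  have h_quarter : Real.log (1 / 4) = -(2 * Real.log 2) := by
    rw [one_div, Real.log_inv, h_four]
  have h_log_q : Real.log ((1 - p) / 8) = Real.log (1 - p) - 3 * Real.log 2 := by
    rw [Real.log_div (by linarith) (by norm_num), h_eight]
  have h_log_p : p * Real.log (p / 8) = p * (Real.log p - 3 * Real.log 2) := by
    rcases eq_or_ne p 0 with rfl | h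
    · simp
    · rw [Real.log_div h (by norm_num), h_eight]
  have h_X : margX (PotNoisy p) = fun _ => 1 / 4 := by
    ext ⟨x₀, x₁⟩
    cases x₀ <;> cases x₁ <;> simp [margX, PotNoisy, Fintype.sum_prod_type] <;> ring
  have h_Y : margY (PotNoisy p) = fun _ => 1 / 4 := by
    ext ⟨c, y⟩
    cases c <;> cases y <;> simp [margY, PotNoisy, Fintype.sum_prod_type] <;> ring
  rw [mutualInfo, h_X, h_Y, Real.binEntropy_eq_negMulLog_add_negMulLog_one_sub]
  simp only [shannonEntropy, PotNoisy, Fintype.sum_prod_type, Fintype.sum_bool,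
    Bool.false_eq_true, Bool.true_eq_false, if_true, if_false, Real.logb, h_quarter, h_log_q,
    Real.negMulLog]
  field_simp
  linear_combination 32 * h_log_p

theorem binEntropy_ge_of_le {p : ℝ} (hp0 : 0 ≤ p) (hp : p ≤ 293 / 2000) :
    16 / 5 * (p * (1 - p)) ≤ Real.binEntropy p := by
  rw [Real.binEntropy_eq_negMulLog_add_negMulLog_one_sub, Real.negMulLog, Real.negMulLog]
  have h_q : Real.log (1 - p) ≤ -p := by
    linarith [Real.log_le_sub_one_of_pos (show 0 < 1 - p by linarith)]
  have h_p : p * Real.log p ≤ p * (-(11 / 5) * (1 - p)) := by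
    rcases hp0.eq_or_lt with rfl | h
    · simp
    · refine mul_le_mul_of_nonneg_left ?_ hp0
      have h_tangent := Real.log_le_sub_one_of_pos (show 0 < 7 * p by linarith)
      rw [Real.log_mul (by norm_num) h.ne'] at h_tangent
      have h_seven := Real.log_le_sub_one_of_pos (show (0 : ℝ) < 2 ^ 3 / 7 by norm_num)
      rw [Real.log_div (by norm_num) (by norm_num), Real.log_pow] at h_seven
      push_cast at h_seven
      linarith [Real.log_two_gt_d9]
  nlinarith [mul_le_mul_of_nonneg_left h_q (show 0 ≤ 1 - p by linarith)]

theorem log_seven_div_five_le : Real.log (7 / 5) ≤ 337 / 1000 := by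
  have h := Real.log_le_sub_one_of_pos (show (0 : ℝ) < (7 / 5) ^ 2 / 2 by norm_num)
  rw [Real.log_div (by norm_num) (by norm_num), Real.log_pow] at h
  push_cast at h
  linarith [Real.log_two_lt_d9]

theorem one_half_sub_inv_two_sqrt_two_le : 1 / 2 - 1 / (2 * √2) ≤ 293 / 2000 := by
  have h : √2 ≤ 1.4144 := Real.sqrt_le_iff.2 (by norm_num)
  have h_inv : 1 / (2 * 1.4144) ≤ 1 / (2 * √2) := by gcongr
  norm_num at h_inv ⊢
  linarith

/-- for `0 ≤ p < 1/2 − 1/(2√2)`, every regular embedding of `P^{OT_p}`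
has leakage at least `(1/2 − p − √(p(1−p)))² / (32 ln 2)`. -/
theorem noisy_ot_leakage (p : ℝ) (hp0 : 0 ≤ p)
    (hp : p < 1 / 2 - 1 / (2 * Real.sqrt 2)) :
    ∀ θ : (Bool × Bool) × (Bool × Bool) → ℝ,
      (1 / 2 - p - Real.sqrt (p * (1 - p))) ^ 2 / (32 * Real.log 2) ≤
        regLeakage (PotNoisy p) θ := by
  intro θ
  have hp1 : p ≤ 293 / 2000 := hp.le.trans one_half_sub_inv_two_sqrt_two_le
  set s := √(p * (1 - p)) with hs
  have h_sq : s ^ 2 = p * (1 - p) := Real.sq_sqrt (mul_nonneg hp0 (by linarith))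
  have h_entropy := log_two_mul_vonNeumannEntropy_ge
    (trLeft_outer_posSemidef (regEmbed (PotNoisy p) θ))
    (by rw [trace_trLeft_regEmbed (PotNoisy_nonneg hp0 (by linarith)), sum_PotNoisy,
      Complex.ofReal_one])
    (show (0 : ℝ) < 7 / 5 / 2 by norm_num)
  rw [Real.log_div (by norm_num) (by norm_num)] at h_entropy
  have h_purity : ∑ i, ∑ j, ‖trLeft (outer (regEmbed (PotNoisy p) θ)) i j‖ ^ 2 ≤
      3 / 8 + s / 2 + 3 / 2 * s ^ 2 := by
    rw [hs, ← sum_sq_overlap_PotNoisy hp0 (by linarith)]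
    gcongr
    exact norm_trLeft_regEmbed_le _ _ _ _
  have h_info := log_two_mul_mutualInfo_PotNoisy (show p < 1 by linarith)
  have h_bin := binEntropy_ge_of_le hp0 hp1
  rw [← h_sq] at h_bin
  have h_s : s ≤ 2 / 5 := Real.sqrt_le_iff.2 ⟨by norm_num, by nlinarith⟩
  have h_gap : (1 / 2 - p - s) ^ 2 ≤ (1 / 2 - s) ^ 2 := by
    nlinarith [mul_nonneg hp0 (show 0 ≤ 1 - 2 * s - p by linarith)]
  rw [div_le_iff₀ (by positivity), regLeakage]
  nlinarith [log_seven_div_five_le, sq_nonneg (s - 1 / 3)]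

end
end
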